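/- arXiv:2502.03839 — 2 statements merged into one kernel-verified Lean document; each statement's English description precedes it below -/
import Mathlib

section
/- Let N be a 2-2-XOR-BN on n nodes, let U be a control node set for N, and let t* be the minimum positive integer such that for every initial state x^0 and every target state x^T there exist control signals driving N from x(0)=x^0 to x(t*)=x^T in exactly t* steps. Then n/t* ≤ |U| ≤ n − t* + 1. -/
namespace BN

variable {n : ℕ}

/-- The Boolean function `f` depends on input `j`. -/
def Depends (f : (Fin n → Bool) → Bool) (j : Fin n) : Prop :=
  ∃ x : Fin n → Bool, f (Function.update x j (!(x j))) ≠ f x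

/-- The set of incoming nodes of node `i` (Γ⁻). -/
def inSet (F : Fin n → (Fin n → Bool) → Bool) (i : Fin n) : Set (Fin n) :=
  {j | Depends (F i) j}

/-- The set of outgoing nodes of node `i` (Γ⁺). -/
def outSet (F : Fin n → (Fin n → Bool) → Bool) (i : Fin n) : Set (Fin n) :=
  {j | Depends (F j) i}

/-- The controlled trajectory: nodes in `U` get an xor-control signal. -/
def traj (F : Fin n → (Fin n → Bool) → Bool) (U : Finset (Fin n))
    (u : ℕ → Fin n → Bool) (x0 : Fin n → Bool) : ℕ → Fin n → Bool
  | 0 => x0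
  | t + 1 => fun i =>
      if i ∈ U then Bool.xor (u t i) (F i (traj F U u x0 t))
      else F i (traj F U u x0 t)

/-- `U` is a control node set: any initial state can be driven to any target state. -/
def IsControlSet (F : Fin n → (Fin n → Bool) → Bool) (U : Finset (Fin n)) : Prop :=
  ∀ x0 xT : Fin n → Bool, ∃ t : ℕ, 1 ≤ t ∧ ∃ u : ℕ → Fin n → Bool, traj F U u x0 t = xT

/-- XOR (parity) of the inputs in `S`. -/
def xorFun (S : Finset (Fin n)) (x : Fin n → Bool) : Bool :=
  decide ((S.filter (fun j => x j = true)).card % 2 = 1)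

/-- `f` is the XOR of `k` distinct inputs, or its negation. -/
def IsKXor (k : ℕ) (f : (Fin n → Bool) → Bool) : Prop :=
  ∃ S : Finset (Fin n), S.card = k ∧ (f = xorFun S ∨ f = fun x => !(xorFun S x))

/-- A `k`-`k`-XOR-BN: each function is a `k`-input XOR (or negation) and
every node has indegree `k` and outdegree `k`. -/
def IsKKXorBN (k : ℕ) (F : Fin n → (Fin n → Bool) → Bool) : Prop :=
  (∀ i, IsKXor k (F i)) ∧ ∀ i, (inSet F i).ncard = k ∧ (outSet F i).ncard = k

/-- All pairs of states are connected in exactly `t` steps under controls on `U`. -/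
def ReachIn (F : Fin n → (Fin n → Bool) → Bool) (U : Finset (Fin n)) (t : ℕ) : Prop :=
  ∀ x0 xT : Fin n → Bool, ∃ u : ℕ → Fin n → Bool, traj F U u x0 t = xT

/-!
Over the field `Bool` with two elements, with `xor` as addition, a network of XOR functions is an
affine map and the control signals are the vectors supported on `U`. Hence the states reachable in
`t` steps form a translate of the controllability subspace `Rₜ = P + A P + ⋯ + Aᵗ⁻¹ P`, where `A` is
the linear part of the network and `dim P = |U|`, and `t*` is the least `t ≥ 1` with `Rₜ` the whole
space. The lower bound on `|U|` is `dim Rₜ ≤ t * dim P`. For the upper bound, `Rₜ₊₁` is a function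
of `Rₜ`, so the chain is stationary as soon as one inclusion is an equality: it increases strictly
from `R₁ = P` up to the whole space, gaining at least one dimension at each step.
-/

open Module
open scoped Pointwise

section ReachableSubspace

variable {K V : Type*}

/-- The controllability subspace `P + A P + ⋯ + A ^ (t - 1) P` of the linear system
`x ↦ A x + p` with inputs `p ∈ P`: the states reachable from `0` in exactly `t` steps. -/
def reachableSubspace [Semiring K] [AddCommMonoid V] [Module K V] (A : V →ₗ[K] V)
    (P : Submodule K V) (t : ℕ) : Submodule K V :=
  (fun W => W.map A ⊔ P)^[t] ⊥

section Semiring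

variable [Semiring K] [AddCommMonoid V] [Module K V] (A : V →ₗ[K] V) (P : Submodule K V)

theorem reachableSubspace_zero : reachableSubspace A P 0 = ⊥ := rfl

theorem reachableSubspace_succ (t : ℕ) :
    reachableSubspace A P (t + 1) = (reachableSubspace A P t).map A ⊔ P :=
  Function.iterate_succ_apply' _ _ _

theorem reachableSubspace_one : reachableSubspace A P 1 = P := by
  rw [reachableSubspace_succ, reachableSubspace_zero, Submodule.map_bot, bot_sup_eq]

theorem monotone_reachableSubspace : Monotone (reachableSubspace A P) :=
  Monotone.monotone_iterate_of_le_map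
    (fun _ _ h => sup_le_sup_right (Submodule.map_mono h) P) bot_le

variable {A P}

theorem reachableSubspace_eq_of_succ_eq {s t : ℕ}
    (h : reachableSubspace A P (s + 1) = reachableSubspace A P s) (hst : s ≤ t) :
    reachableSubspace A P t = reachableSubspace A P s := by
  induction t, hst using Nat.le_induction with
  | base => rfl
  | succ t _ ih => rw [reachableSubspace_succ, ih, ← reachableSubspace_succ, h]

theorem reachableSubspace_lt_succ {t T : ℕ} (hT : reachableSubspace A P T = ⊤)
    (ht : reachableSubspace A P t ≠ ⊤) :
    reachableSubspace A P t < reachableSubspace A P (t + 1) := by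
  refine (monotone_reachableSubspace A P t.le_succ).lt_of_ne fun h => ht ?_
  rcases le_total t T with htT | hTt
  · rw [← reachableSubspace_eq_of_succ_eq h.symm htT, hT]
  · exact top_unique (hT.ge.trans (monotone_reachableSubspace A P hTt))

end Semiring

section DivisionRing

variable [DivisionRing K] [AddCommGroup V] [Module K V] [FiniteDimensional K V]
  {A : V →ₗ[K] V} {P : Submodule K V} {T : ℕ}

variable (A P) in
theorem finrank_reachableSubspace_le (t : ℕ) :
    finrank K (reachableSubspace A P t) ≤ t * finrank K P := by
  induction t with
  | zero => rw [reachableSubspace_zero, finrank_bot, zero_mul]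
  | succ t ih =>
    calc finrank K (reachableSubspace A P (t + 1))
        ≤ finrank K ((reachableSubspace A P t).map A) + finrank K P := by
          rw [reachableSubspace_succ]
          exact Submodule.finrank_add_le_finrank_add_finrank _ _
      _ ≤ t * finrank K P + finrank K P := by
          gcongr
          exact (Submodule.finrank_map_le A _).trans ih
      _ = (t + 1) * finrank K P := (Nat.succ_mul _ _).symm

theorem finrank_add_le_finrank_reachableSubspace_succ
    (hT : IsLeast {t | 1 ≤ t ∧ reachableSubspace A P t = ⊤} T) {t : ℕ} (ht : t < T) :
    finrank K P + t ≤ finrank K (reachableSubspace A P (t + 1)) := by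
  induction t with
  | zero => rw [reachableSubspace_one, add_zero]
  | succ t ih =>
    have hne : reachableSubspace A P (t + 1) ≠ ⊤ := fun h =>
      ht.not_ge (hT.2 ⟨Nat.le_add_left 1 t, h⟩)
    have hlt := Submodule.finrank_lt_finrank_of_lt (reachableSubspace_lt_succ hT.1.2 hne)
    have := ih (Nat.lt_of_succ_lt ht)
    lia

theorem finrank_le_mul_finrank_of_reachableSubspace_eq_top
    (hT : reachableSubspace A P T = ⊤) : finrank K V ≤ T * finrank K P := by
  rw [← finrank_top K V, ← hT]
  exact finrank_reachableSubspace_le A P T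

theorem finrank_add_le_finrank_add_one_of_isLeast
    (hT : IsLeast {t | 1 ≤ t ∧ reachableSubspace A P t = ⊤} T) :
    finrank K P + T ≤ finrank K V + 1 := by
  obtain ⟨t, rfl⟩ := Nat.exists_eq_add_of_le' hT.1.1
  have h := finrank_add_le_finrank_reachableSubspace_succ hT t.lt_succ_self
  rw [hT.1.2, finrank_top] at h
  lia

end DivisionRing

theorem affineMap_image_vadd_add [Ring K] [AddCommGroup V] [Module K V] (f : V →ᵃ[K] V)
    (c : V) (W P : Submodule K V) :
    f '' (c +ᵥ (W : Set V)) + P = f c +ᵥ ((W.map f.linear ⊔ P : Submodule K V) : Set V) := by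
  have himage : f '' (c +ᵥ (W : Set V)) = f c +ᵥ f.linear '' (W : Set V) := by
    simp_rw [← Set.image_vadd, Set.image_image, vadd_eq_add, add_comm c, ← vadd_eq_add,
      f.map_vadd, vadd_eq_add, add_comm (f c)]
  rw [himage, vadd_add_assoc, Submodule.coe_sup, Submodule.map_coe]

end ReachableSubspace

section BoolField

/-- The two-element field structure on `Bool`, extending Mathlib's ring structure in which addition
is `xor` and multiplication is `and`. -/
instance : Field Bool where
  __ := (inferInstance : CommRing Bool)
  inv := id
  exists_pair_ne := ⟨false, true, Bool.false_ne_true⟩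
  mul_inv_cancel := by decide
  inv_zero := rfl
  nnqsmul := _
  nnqsmul_def := fun _ _ => rfl
  qsmul := _
  qsmul_def := fun _ _ => rfl

theorem natCast_bool_eq_decide (m : ℕ) : (m : Bool) = decide (m % 2 = 1) := by
  induction m with
  | zero => rfl
  | succ m ih =>
    rw [Nat.cast_succ, ih]
    rcases Nat.mod_two_eq_zero_or_one m with h | h <;>
      simp [Nat.add_mod, h, Bool.add_eq_xor, Bool.one_eq_true]

theorem xorFun_eq_sum (S : Finset (Fin n)) (x : Fin n → Bool) : xorFun S x = ∑ j ∈ S, x j := by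
  have hite (b : Bool) : b = if b = true then 1 else 0 := by cases b <;> rfl
  rw [xorFun, ← natCast_bool_eq_decide, Finset.natCast_card_filter]
  exact Finset.sum_congr rfl fun j _ => (hite (x j)).symm

theorem IsKXor.exists_affineMap {k : ℕ} {f : (Fin n → Bool) → Bool} (hf : IsKXor k f) :
    ∃ g : (Fin n → Bool) →ᵃ[Bool] Bool, ⇑g = f := by
  obtain ⟨S, -, hS⟩ := hf
  let parity : (Fin n → Bool) →ₗ[Bool] Bool := ∑ j ∈ S, LinearMap.proj j
  have hparity (x : Fin n → Bool) : parity x = xorFun S x := by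
    simp [parity, xorFun_eq_sum]
  rcases hS with rfl | rfl
  · exact ⟨parity.toAffineMap, funext hparity⟩
  · refine ⟨parity.toAffineMap + AffineMap.const Bool _ true, funext fun x => ?_⟩
    exact (congrArg (· + true) (hparity x)).trans (Bool.xor_true _)

end BoolField

section Trajectory

variable (F : Fin n → (Fin n → Bool) → Bool) (U : Finset (Fin n))

/-- The global transition map of the network in the absence of control. -/
def transition (x : Fin n → Bool) : Fin n → Bool := fun i => F i x

/-- The possible effects of the control signals on a single step: the vectors supported on `U`. -/
noncomputable abbrev controlSubspace : Submodule Bool (Fin n → Bool) :=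
  Pi.spanSubset Bool (U : Set (Fin n))

theorem traj_succ (u : ℕ → Fin n → Bool) (x0 : Fin n → Bool) (t : ℕ) :
    traj F U u x0 (t + 1) =
      transition F (traj F U u x0 t) + (U : Set (Fin n)).indicator (u t) := by
  funext i
  by_cases hi : i ∈ U
  · simp [traj, transition, hi, Bool.add_eq_xor, Bool.xor_comm]
  · simp [traj, transition, hi]

variable {F U} in
theorem traj_congr {u v : ℕ → Fin n → Bool} (x0 : Fin n → Bool) {t : ℕ}
    (h : ∀ s < t, u s = v s) : traj F U u x0 t = traj F U v x0 t := by
  induction t with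
  | zero => rfl
  | succ t ih =>
    have hprev := ih fun s hs => h s (Nat.lt_succ_of_lt hs)
    rw [traj_succ, traj_succ, hprev, h t t.lt_succ_self]

theorem range_traj_succ (x0 : Fin n → Bool) (t : ℕ) :
    Set.range (traj F U · x0 (t + 1)) =
      transition F '' Set.range (traj F U · x0 t) + (controlSubspace U : Set _) := by
  apply Set.Subset.antisymm
  · rintro _ ⟨u, rfl⟩
    have hu : (U : Set (Fin n)).indicator (u t) ∈ controlSubspace U :=
      Pi.mem_spanSubset_iff.2 fun i hi => Set.indicator_of_notMem hi _
    exact Set.mem_add.2 ⟨_, ⟨_, ⟨u, rfl⟩, rfl⟩, _, hu, (traj_succ F U u x0 t).symm⟩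
  · rintro _ ⟨_, ⟨_, ⟨u, rfl⟩, rfl⟩, p, hp, rfl⟩
    have hindicator : (U : Set (Fin n)).indicator p = p :=
      Set.indicator_eq_self.2 (Function.support_subset_iff'.2 (Pi.mem_spanSubset_iff.1 hp))
    refine ⟨Function.update u t p, ?_⟩
    have hcongr : traj F U (Function.update u t p) x0 t = traj F U u x0 t :=
      traj_congr x0 fun s hs => Function.update_of_ne hs.ne _ _
    simp only [traj_succ, hcongr, Function.update_self, hindicator]

variable {F} {f : (Fin n → Bool) →ᵃ[Bool] (Fin n → Bool)} (hf : ⇑f = transition F)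
include hf

theorem range_traj_eq_vadd_reachableSubspace (x0 : Fin n → Bool) (t : ℕ) :
    Set.range (traj F U · x0 t) =
      f^[t] x0 +ᵥ (reachableSubspace f.linear (controlSubspace U) t : Set _) := by
  induction t with
  | zero => simp [traj, reachableSubspace_zero]
  | succ t ih =>
    rw [range_traj_succ, ih, ← hf, affineMap_image_vadd_add, reachableSubspace_succ,
      Function.iterate_succ_apply']

theorem reachIn_iff_reachableSubspace_eq_top (t : ℕ) :
    ReachIn F U t ↔ reachableSubspace f.linear (controlSubspace U) t = ⊤ := by
  calc ReachIn F U t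
      ↔ ∀ x0, Set.range (traj F U · x0 t) = Set.univ := by
        simp only [ReachIn, Set.eq_univ_iff_forall, Set.mem_range]
    _ ↔ reachableSubspace f.linear (controlSubspace U) t = ⊤ := by
        simp only [range_traj_eq_vadd_reachableSubspace U hf, Set.vadd_set_eq_univ,
          Submodule.coe_eq_univ, forall_const]

end Trajectory

theorem stmt5_general (n : ℕ) (F : Fin n → (Fin n → Bool) → Bool) (hF : ∀ i, ∃ k, IsKXor k (F i))
    (U : Finset (Fin n)) (tstar : ℕ) (h1 : 1 ≤ tstar) (hreach : ReachIn F U tstar)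
    (hmin : ∀ t : ℕ, 1 ≤ t → ReachIn F U t → tstar ≤ t) :
    (n : ℚ) / tstar ≤ U.card ∧ (U.card : ℚ) ≤ (n : ℚ) - tstar + 1 := by
  have haffine (i : Fin n) : ∃ g : (Fin n → Bool) →ᵃ[Bool] Bool, ⇑g = F i :=
    (hF i).elim fun _ h => h.exists_affineMap
  choose g hg using haffine
  have hf : ⇑(AffineMap.pi g) = transition F := funext fun x => funext fun i => congrFun (hg i) x
  simp only [reachIn_iff_reachableSubspace_eq_top U hf] at hreach hmin
  have hlower := finrank_le_mul_finrank_of_reachableSubspace_eq_top hreach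
  have hupper := finrank_add_le_finrank_add_one_of_isLeast
    ⟨⟨h1, hreach⟩, fun t ht => hmin t ht.1 ht.2⟩
  simp only [finrank_fin_fun, Pi.dim_spanSubset, Set.ncard_coe_finset] at hlower hupper
  constructor
  · rw [div_le_iff₀' (by exact_mod_cast h1)]
    exact_mod_cast hlower
  · have : (U.card : ℚ) + tstar ≤ n + 1 := by exact_mod_cast hupper
    linarith

/-- For a 2-2-XOR-BN with control node set `U`, if `t*` is the minimum
positive time in which every state can be driven to every state, then
`n / t* ≤ |U| ≤ n − t* + 1`. -/
theorem stmt5 (n : ℕ) (F : Fin n → (Fin n → Bool) → Bool) (hF : IsKKXorBN 2 F)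
    (U : Finset (Fin n)) (hU : IsControlSet F U)
    (tstar : ℕ) (h1 : 1 ≤ tstar) (hreach : ReachIn F U tstar)
    (hmin : ∀ t : ℕ, 1 ≤ t → ReachIn F U t → tstar ≤ t) :
    (n : ℚ) / tstar ≤ U.card ∧ (U.card : ℚ) ≤ (n : ℚ) - tstar + 1 :=
  stmt5_general n F (fun i => ⟨2, hF.1 i⟩) U tstar h1 hreach hmin

end BN
end

section
/- For every integer k ≥ 2 and every integer n = (2k−1)m + 1 with m > 1, there exists a simple k-k-AND-BN on n nodes for which the size of the minimum control node set is (k−1)m + 1 = ((k−1)/(2k−1))·(n−1) + 1. -/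
namespace BN

variable {n : ℕ}

/-- AND of the inputs in `S` (no negations). -/
def andFun (S : Finset (Fin n)) (x : Fin n → Bool) : Bool :=
  decide (∀ j ∈ S, x j = true)

/-- `f` is the conjunction of `k` distinct inputs (no negations). -/
def IsSimpleKAnd (k : ℕ) (f : (Fin n → Bool) → Bool) : Prop :=
  ∃ S : Finset (Fin n), S.card = k ∧ f = andFun S

/-- A simple `k`-`k`-AND-BN: each function is a `k`-input AND (no negations) and
every node has indegree `k` and outdegree `k`. -/
def IsSimpleKKAndBN (k : ℕ) (F : Fin n → (Fin n → Bool) → Bool) : Prop :=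
  (∀ i, IsSimpleKAnd k (F i)) ∧ ∀ i, (inSet F i).ncard = k ∧ (outSet F i).ncard = k

/-! In an AND network that is controllable from `U`, reaching the state with a single `false` at a
node `i ∉ U` needs an input of `i` that feeds no other node outside `U`. Each such private input
sends all its other edges into `U`, and double counting these edges bounds `U` from below.
Conversely, if every node outside `U` has a private input and the nodes outside `U` induce an
acyclic subnetwork, the network is controllable: the state with all nodes `true` can be reached,
and a `false` is created at a node by a `false` on its private input one step earlier.

The bound is attained as follows. A block consists of `k` uncontrolled and `k - 1` controlled
targets, and of `k` private and `k - 1` shared sources; the private sources are matched with the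
uncontrolled targets, and the pairs (uncontrolled target, shared source) and (controlled target,
private source) are all joined, so that every degree is `k`. One more target and one more source
are added to `m` disjoint blocks by subdividing a matching of size `k - 1`. Finally the targets
and the sources are identified through a cyclic shift of one enumeration, so that every
uncontrolled node has its predecessor as private input, which makes them a path. -/

open Finset Relation

/-! ### Controlled steps -/

section Step

variable {F : Fin n → (Fin n → Bool) → Bool} {U : Finset (Fin n)} {x y : Fin n → Bool}

/-- One-step reachability under the controlled dynamics: the controlled nodes take arbitrary
values, so only the values at the other nodes are constrained. -/
def Step (F : Fin n → (Fin n → Bool) → Bool) (U : Finset (Fin n)) (x y : Fin n → Bool) : Prop :=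
  ∀ i ∉ U, y i = F i x

theorem step_traj_succ (u : ℕ → Fin n → Bool) (t : ℕ) :
    Step F U (traj F U u x t) (traj F U u x (t + 1)) := fun i hi => by
  simp [traj, hi]

theorem traj_one_of_step {u : ℕ → Fin n → Bool} (h : Step F U x y)
    (hu : ∀ i, u 0 i = Bool.xor (y i) (F i x)) : traj F U u x 1 = y := by
  funext i
  by_cases hi : i ∈ U
  · simp [traj, hi, hu]
  · simp [traj, hi, h i hi]

theorem traj_add_one' (u : ℕ → Fin n → Bool) (x : Fin n → Bool) (t : ℕ) :
    traj F U u x (t + 1) = traj F U (fun s => u (s + 1)) (traj F U u x 1) t := by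
  induction t with
  | zero => rfl
  | succ t ih =>
    rw [traj, ih]
    rfl

theorem exists_traj_eq_iff :
    (∃ t, 1 ≤ t ∧ ∃ u, traj F U u x t = y) ↔ TransGen (Step F U) x y := by
  constructor
  · rintro ⟨t, ht, u, rfl⟩
    induction t, ht using Nat.le_induction with
    | base => exact .single (step_traj_succ u 0)
    | succ t _ ih => exact ih.tail (step_traj_succ u t)
  · intro h
    induction h using TransGen.head_induction_on with
    | @single x h => exact ⟨1, le_rfl, fun _ i => Bool.xor (y i) (F i x),
        traj_one_of_step h fun _ => rfl⟩
    | @head x z h _ ih =>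
      obtain ⟨t, _, u, rfl⟩ := ih
      let u' : ℕ → Fin n → Bool
        | 0 => fun i => Bool.xor (z i) (F i x)
        | s + 1 => u s
      have hz : traj F U u' x 1 = z := traj_one_of_step h fun _ => rfl
      exact ⟨t + 1, Nat.le_add_left 1 t, u', by rw [traj_add_one', hz]⟩

theorem isControlSet_iff : IsControlSet F U ↔ ∀ x y, TransGen (Step F U) x y :=
  forall₂_congr fun _ _ => exists_traj_eq_iff

end Step

/-! ### AND networks and their wiring -/

section AndNet

/-- The relation `r`, seen as a bipartite graph between `α` and `β`, is `k`-regular on both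
sides. -/
def IsBiregular {α β : Type*} (r : α → β → Prop) (k : ℕ) : Prop :=
  (∀ a, {b | r a b}.ncard = k) ∧ ∀ b, {a | r a b}.ncard = k

open scoped Classical in
/-- The AND network with wiring `r`, where `r i j` means that `j` is an incoming node of `i`. -/
noncomputable def andNet (r : Fin n → Fin n → Prop) (i : Fin n) : (Fin n → Bool) → Bool :=
  andFun {j | r i j}

variable {r : Fin n → Fin n → Prop} {i j : Fin n} {x : Fin n → Bool}

theorem andNet_eq_true : andNet r i x = true ↔ ∀ j, r i j → x j = true := by
  simp [andNet, andFun]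

theorem andNet_eq_false : andNet r i x = false ↔ ∃ j, r i j ∧ x j = false := by
  simp [andNet, andFun]

theorem depends_andFun {S : Finset (Fin n)} : Depends (andFun S) j ↔ j ∈ S := by
  constructor
  · rintro ⟨x, hx⟩
    contrapose! hx
    refine decide_eq_decide.mpr (forall₂_congr fun i hi => ?_)
    rw [Function.update_of_ne (ne_of_mem_of_not_mem hi hx)]
  · intro hj
    refine ⟨fun _ => true, ?_⟩
    have htrue : andFun S (fun _ => true) = true := decide_eq_true fun _ _ => rfl
    have hfalse : andFun S (Function.update (fun _ => true) j false) = false :=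
      decide_eq_false fun h => by simpa using h j hj
    simp [htrue, hfalse]

theorem depends_andNet : Depends (andNet r i) j ↔ r i j := by
  simp [andNet, depends_andFun]

theorem isSimpleKKAndBN_iff {k : ℕ} {F : Fin n → (Fin n → Bool) → Bool} :
    IsSimpleKKAndBN k F ↔ ∃ r, IsBiregular r k ∧ F = andNet r := by
  classical
  constructor
  · rintro ⟨hand, hdeg⟩
    refine ⟨fun i j => Depends (F i) j, ⟨fun i => (hdeg i).1, fun i => (hdeg i).2⟩, ?_⟩
    funext i
    obtain ⟨S, -, hS⟩ := hand i
    simp [andNet, hS, depends_andFun]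
  · rintro ⟨r, hr, rfl⟩
    refine ⟨fun i => ⟨univ.filter (r i), ?_, by simp [andNet]⟩, fun i => ?_⟩
    · rw [← hr.1 i, ← Set.ncard_coe_finset, coe_filter_univ]
    · simpa only [inSet, outSet, depends_andNet] using ⟨hr.1 i, hr.2 i⟩

end AndNet

/-! ### Private inputs and the lower bound -/

section PrivateInput

variable {r : Fin n → Fin n → Prop} {U : Finset (Fin n)}

/-- `q` is a private input of `i` with respect to the control nodes `U`: an incoming node of `i`
that feeds no other uncontrolled node. -/
def IsPrivateInput (r : Fin n → Fin n → Prop) (U : Finset (Fin n)) (i q : Fin n) : Prop :=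
  r i q ∧ ∀ j ∉ U, r j q → j = i

theorem IsControlSet.exists_isPrivateInput (hU : IsControlSet (andNet r) U) {i : Fin n}
    (hi : i ∉ U) : ∃ q, IsPrivateInput r U i q := by
  obtain ⟨y, -, hy⟩ := TransGen.tail'_iff.mp
    (isControlSet_iff.mp hU (fun _ => true) (Function.update (fun _ => true) i false))
  obtain ⟨q, hiq, hq⟩ := andNet_eq_false.mp ((hy i hi).symm.trans (Function.update_self ..))
  refine ⟨q, hiq, fun j hj hjq => ?_⟩
  by_contra hji
  have hyj := andNet_eq_true.mp ((hy j hj).symm.trans (Function.update_of_ne hji ..))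
  simpa [hq] using hyj q hjq

theorem IsControlSet.card_compl_mul_le {k : ℕ} (hU : IsControlSet (andNet r) U)
    (hr : IsBiregular r (k + 1)) : #Uᶜ * k ≤ #U * (k + 1) := by
  classical
  choose! p hp using fun i (hi : i ∈ Uᶜ) => hU.exists_isPrivateInput (mem_compl.mp hi)
  refine card_mul_le_card_mul (fun i j => r j (p i)) (fun i hi => ?_) fun j _ => ?_
  · have hsub : ({j | r j (p i)} : Set (Fin n)) ⊆
        insert i (U.bipartiteAbove (fun i j => r j (p i)) i) := fun j hj => by
      by_cases hjU : j ∈ U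
      · exact .inr (mem_coe.mpr (mem_filter.mpr ⟨hjU, hj⟩))
      · exact .inl ((hp i hi).2 j hjU hj)
    have hcard := (Set.ncard_le_ncard hsub).trans (Set.ncard_insert_le _ _)
    rw [hr.2, Set.ncard_coe_finset] at hcard
    exact Nat.le_of_succ_le_succ hcard
  · have hinj : Set.InjOn p ↑(Uᶜ.bipartiteBelow (fun i j => r j (p i)) j) :=
      fun i hi i' hi' h => by
        have hiU := (mem_filter.mp hi).1
        have hiU' := (mem_filter.mp hi').1
        exact (hp i' hiU').2 i (mem_compl.mp hiU) (h ▸ (hp i hiU).1)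
    rw [← hr.1 j, ← Set.ncard_coe_finset]
    exact Set.ncard_le_ncard_of_injOn p (fun i hi => (mem_filter.mp hi).2) hinj

theorem IsSimpleKKAndBN.mul_le_card {k : ℕ} {F : Fin n → (Fin n → Bool) → Bool}
    (hF : IsSimpleKKAndBN (k + 1) F) (hU : IsControlSet F U) : n * k ≤ (2 * k + 1) * #U := by
  obtain ⟨r, hr, rfl⟩ := isSimpleKKAndBN_iff.mp hF
  calc
    n * k = #U * k + #Uᶜ * k := by rw [← add_mul, card_add_card_compl, Fintype.card_fin]
    _ ≤ #U * k + #U * (k + 1) := by grw [hU.card_compl_mul_le hr]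
    _ = (2 * k + 1) * #U := by ring

end PrivateInput

/-! ### Controllability from private inputs -/

section Acyclic

variable {r : Fin n → Fin n → Prop} {U : Finset (Fin n)} {rank : Fin n → ℕ}

theorem transGen_step_true (hrank : ∀ i ∉ U, ∀ j ∉ U, r i j → rank j < rank i)
    (x : Fin n → Bool) : TransGen (Step (andNet r) U) x fun _ => true := by
  have hstep (y : Fin n → Bool) : Step (andNet r) U y fun i => decide (i ∈ U) || andNet r i y :=
    fun i hi => by simp [hi]
  have htrue (l : ℕ) : ∃ y, TransGen (Step (andNet r) U) x y ∧
      ∀ i, i ∈ U ∨ rank i < l → y i = true := by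
    induction l with
    | zero => exact ⟨_, .single (hstep x), fun i hi => by simp [hi.resolve_right (by simp)]⟩
    | succ l ih =>
      obtain ⟨y, hxy, hy⟩ := ih
      refine ⟨_, hxy.tail (hstep y), fun i hi => ?_⟩
      by_cases hiU : i ∈ U
      · simp [hiU]
      · have hiy : andNet r i y = true := andNet_eq_true.mpr fun j hij =>
          hy j (or_iff_not_imp_left.mpr fun hjU =>
            (hrank i hiU j hjU hij).trans_le (Nat.lt_succ_iff.mp (hi.resolve_left hiU)))
        simp [hiy]
  obtain ⟨y, hxy, hy⟩ := htrue (univ.sup rank + 1)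
  have hy' : y = fun _ => true := funext fun i =>
    hy i (.inr (Nat.lt_succ_of_le (le_sup (mem_univ i))))
  exact hy' ▸ hxy

theorem exists_step_of_isPrivateInput {p : Fin n → Fin n}
    (hp : ∀ i ∉ U, IsPrivateInput r U i (p i)) (z : Fin n → Bool) :
    ∃ y, Step (andNet r) U y z ∧ ∀ q, y q = false → ∃ i ∉ U, z i = false ∧ p i = q := by
  refine ⟨fun q => decide (∀ i ∉ U, z i = false → p i ≠ q), fun i hi => ?_,
    fun q hq => by simpa using hq⟩
  cases hzi : z i with
  | false => exact (andNet_eq_false.mpr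
      ⟨p i, (hp i hi).1, decide_eq_false fun h => h i hi hzi rfl⟩).symm
  | true =>
    refine (andNet_eq_true.mpr fun q hiq => decide_eq_true ?_).symm
    rintro j hj hzj rfl
    simp [(hp j hj).2 i hi hiq, hzj] at hzi

theorem isControlSet_of_isPrivateInput (hrank : ∀ i ∉ U, ∀ j ∉ U, r i j → rank j < rank i)
    {p : Fin n → Fin n} (hp : ∀ i ∉ U, IsPrivateInput r U i (p i)) :
    IsControlSet (andNet r) U := by
  refine isControlSet_iff.mpr fun x => ?_
  have hreach (l : ℕ) : ∀ z : Fin n → Bool, (∀ i ∉ U, z i = false → rank i < l) →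
      TransGen (Step (andNet r) U) x z := by
    induction l with
    | zero =>
      refine fun z hz => (transGen_step_true hrank x).tail fun i hi => ?_
      rw [andNet_eq_true.mpr fun _ _ => rfl]
      simpa using hz i hi
    | succ l ih =>
      intro z hz
      obtain ⟨y, hyz, hy⟩ := exists_step_of_isPrivateInput hp z
      refine (ih y fun q hq hyq => ?_).tail hyz
      obtain ⟨i, hi, hzi, rfl⟩ := hy q hyq
      exact (hrank i hi _ hq (hp i hi).1).trans_le (Nat.lt_succ_iff.mp (hz i hi hzi))
  exact fun z => hreach (univ.sup rank + 1) z fun i _ _ => Nat.lt_succ_of_le (le_sup (mem_univ i))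

theorem isControlSet_andNet_finRotate {c : ℕ} {r : Fin (n + 1) → Fin (n + 1) → Prop}
    (hdiag : ∀ i j : Fin (n + 1), c ≤ i.val → c ≤ j.val → (r i j ↔ i = j))
    (hzero : ∀ i : Fin (n + 1), c ≤ i.val → ¬ r i 0) :
    IsControlSet (andNet fun i j => r i (finRotate (n + 1) j)) {i | i.val < c} := by
  have hmem {i : Fin (n + 1)} : i ∉ ({i | i.val < c} : Finset (Fin (n + 1))) ↔ c ≤ i.val := by simp
  refine isControlSet_of_isPrivateInput (rank := Fin.val) (p := (finRotate (n + 1)).symm)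
    (fun i hi j hj hij => ?_) fun i hi => ⟨?_, fun j hj hji => ?_⟩
  · rw [hmem] at hi hj
    have hlast : j ≠ Fin.last n := by
      rintro rfl
      exact hzero i hi (finRotate_last (n := n) ▸ hij)
    have hsucc := coe_finRotate_of_ne_last hlast
    rw [(hdiag i _ hi (by omega)).mp hij]
    omega
  · rw [hmem] at hi
    simpa only [Equiv.apply_symm_apply] using (hdiag i i hi hi).mpr rfl
  · rw [hmem] at hi hj
    rw [Equiv.apply_symm_apply] at hji
    exact (hdiag j i hj hi).mp hji

end Acyclic

/-! ### Biregular relations -/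

section Biregular

variable {α β α' β' ι : Type*} {r : α → β → Prop} {k : ℕ}

theorem IsBiregular.comp_equiv (h : IsBiregular r k) (e : α' ≃ α) (f : β' ≃ β) :
    IsBiregular (fun a b => r (e a) (f b)) k := by
  constructor
  · intro a
    rw [← h.1 (e a)]
    exact Set.ncard_congr' (f.subtypeEquiv fun _ => Iff.rfl)
  · intro b
    rw [← h.2 (f b)]
    exact Set.ncard_congr' (e.subtypeEquiv fun _ => Iff.rfl)

/-- The bipartite graph `r` with one vertex `none` added on each side: the two new vertices are
joined, and each edge of `r` from `s i` to `t i` is replaced by the edges from `s i` to `none` and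
from `none` to `t i`. -/
def insertNode (r : α → β → Prop) (s : ι → α) (t : ι → β) : Option α → Option β → Prop
  | some a, some b => r a b ∧ ¬∃ i, s i = a ∧ t i = b
  | some a, none => a ∈ Set.range s
  | none, some b => b ∈ Set.range t
  | none, none => True

theorem flip_insertNode (s : ι → α) (t : ι → β) :
    flip (insertNode r s t) = insertNode (flip r) t s := by
  ext (_ | b) (_ | a) <;> simp [flip, insertNode, and_comm]

theorem ncard_insertNode [Finite β] {s : ι → α} {t : ι → β} (hs : s.Injective) (ht : t.Injective)
    (hst : ∀ i, r (s i) (t i)) (hr : ∀ a, {b | r a b}.ncard = Nat.card ι + 1) (o : Option α) :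
    {b | insertNode r s t o b}.ncard = Nat.card ι + 1 := by
  rcases o with _ | a
  · have hrow : {b | insertNode r s t none b} = insert none (some '' Set.range t) := by
      ext (_ | b) <;> simp [insertNode]
    rw [hrow, Set.ncard_insert_of_notMem (by simp),
      Set.ncard_image_of_injective _ (Option.some_injective β), Set.ncard_range_of_injective ht]
  by_cases ha : a ∈ Set.range s
  · obtain ⟨i, rfl⟩ := ha
    have hrow : {b | insertNode r s t (some (s i)) b} =
        insert none (some '' ({b | r (s i) b} \ {t i})) := by
      ext (_ | b) <;> simp [insertNode, hs.eq_iff, eq_comm]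
    rw [hrow, Set.ncard_insert_of_notMem (by simp),
      Set.ncard_image_of_injective _ (Option.some_injective β),
      Set.ncard_sdiff_singleton_add_one (show t i ∈ {b | r (s i) b} from hst i), hr]
  · have hrow : {b | insertNode r s t (some a) b} = some '' {b | r a b} := by
      ext (_ | b)
      · simpa [insertNode] using ha
      · have hne : ∀ i, s i ≠ a := fun i hi => ha ⟨i, hi⟩
        simp [insertNode, hne]
    rw [hrow, Set.ncard_image_of_injective _ (Option.some_injective β), hr]

theorem isBiregular_insertNode [Finite α] [Finite β] {s : ι → α} {t : ι → β}
    (h : IsBiregular r (Nat.card ι + 1)) (hs : s.Injective) (ht : t.Injective)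
    (hst : ∀ i, r (s i) (t i)) : IsBiregular (insertNode r s t) (Nat.card ι + 1) := by
  refine ⟨ncard_insertNode hs ht hst h.1, fun o => ?_⟩
  change {b | flip (insertNode r s t) o b}.ncard = _
  rw [flip_insertNode]
  exact ncard_insertNode (r := flip r) ht hs hst h.2 o

end Biregular

/-! ### The extremal wiring -/

section Block

variable (ι κ : Type*)

/-- Disjoint blocks indexed by `ι`. The vertices `inl (i, x)` are the controlled targets,
respectively the shared sources, of the block `i`, and the vertices `inr (i, o)` its uncontrolled
targets, respectively their private sources. -/
def blockRel : (ι × κ) ⊕ (ι × Option κ) → (ι × κ) ⊕ (ι × Option κ) → Prop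
  | .inl _, .inl _ => False
  | .inl a, .inr b => a.1 = b.1
  | .inr a, .inl b => a.1 = b.1
  | .inr a, .inr b => a = b

theorem blockRel_comm (a b : (ι × κ) ⊕ (ι × Option κ)) : blockRel ι κ a b ↔ blockRel ι κ b a := by
  rcases a with a | a <;> rcases b with b | b <;> simp [blockRel, eq_comm]

theorem isBiregular_blockRel [Finite κ] : IsBiregular (blockRel ι κ) (Nat.card κ + 1) := by
  have hrow (a) : {b | blockRel ι κ a b}.ncard = Nat.card κ + 1 := by
    rcases a with ⟨i, x⟩ | ⟨i, o⟩
    · have hinj : Function.Injective fun o : Option κ =>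
          (.inr (i, o) : (ι × κ) ⊕ (ι × Option κ)) := fun _ _ h => by simpa using h
      have hrange : {b | blockRel ι κ (.inl (i, x)) b} = Set.range fun o => .inr (i, o) := by
        ext (⟨j, y⟩ | ⟨j, o⟩) <;> simp [blockRel]
      rw [hrange, Set.ncard_range_of_injective hinj, Finite.card_option]
    · have hinj : Function.Injective fun x : κ =>
          (.inl (i, x) : (ι × κ) ⊕ (ι × Option κ)) := fun _ _ h => by simpa using h
      have hrange : {b | blockRel ι κ (.inr (i, o)) b} =
          insert (.inr (i, o)) (Set.range fun x => .inl (i, x)) := by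
        ext (⟨j, y⟩ | ⟨j, o'⟩) <;> simp [blockRel, eq_comm]
      rw [hrange, Set.ncard_insert_of_notMem (by simp) (Set.finite_range _),
        Set.ncard_range_of_injective hinj]
  exact ⟨hrow, fun b => by simpa only [blockRel_comm ι κ _ b] using hrow b⟩

end Block

/-- The enumeration listing `none` first, then `β`, then `α`. With `α` the uncontrolled targets, it
puts the control nodes on an initial segment, and its cyclic shift takes the last node to `none`. -/
def finOptionSumEquiv {α β : Type*} {a b : ℕ} (f : Fin b ≃ β) (e : Fin a ≃ α) :
    Fin (b + a + 1) ≃ Option (β ⊕ α) :=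
  (finSuccEquiv (b + a)).trans (Equiv.optionCongr (finSumFinEquiv.symm.trans (f.sumCongr e)))

theorem finOptionSumEquiv_of_le {α β : Type*} {a b : ℕ} (f : Fin b ≃ β) (e : Fin a ≃ α)
    {i : Fin (b + a + 1)} (hi : b + 1 ≤ i.val) : ∃ x, finOptionSumEquiv f e i = some (.inr x) := by
  obtain ⟨x, rfl⟩ : ∃ x : Fin a, i = (Fin.natAdd b x).succ :=
    ⟨⟨i - (b + 1), by omega⟩, Fin.ext (by simp only [Fin.val_succ, Fin.val_natAdd]; omega)⟩
  exact ⟨e x, by simp [finOptionSumEquiv, -Equiv.optionCongr_symm]⟩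

/-- Taking the sources in the cyclic shift of the enumeration of the targets turns the matching on
`α` into a path. -/
theorem IsBiregular.exists_isSimpleKKAndBN {α β : Type*} [Finite α] [Finite β] {k n : ℕ}
    {r : Option (β ⊕ α) → Option (β ⊕ α) → Prop} (hr : IsBiregular r k)
    (hdiag : ∀ a a', r (some (.inr a)) (some (.inr a')) ↔ a = a')
    (hnone : ∀ a, ¬ r (some (.inr a)) none) (hn : n = Nat.card β + Nat.card α + 1) :
    ∃ (F : Fin n → (Fin n → Bool) → Bool) (U : Finset (Fin n)),
      IsSimpleKKAndBN k F ∧ IsControlSet F U ∧ #U = Nat.card β + 1 := by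
  subst hn
  let φ := finOptionSumEquiv (Finite.equivFin β).symm (Finite.equivFin α).symm
  refine ⟨andNet fun i j => r (φ i) (φ (finRotate _ j)),
    ({i | i.val < Nat.card β + 1} : Finset _),
    isSimpleKKAndBN_iff.mpr ⟨_, hr.comp_equiv φ ((finRotate _).trans φ), rfl⟩,
    isControlSet_andNet_finRotate (r := fun i j => r (φ i) (φ j)) (fun i j hi hj => ?_)
      fun i hi => ?_, ?_⟩
  · obtain ⟨a, ha⟩ := finOptionSumEquiv_of_le _ _ hi
    obtain ⟨a', ha'⟩ := finOptionSumEquiv_of_le _ _ hj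
    rw [← φ.apply_eq_iff_eq, ha, ha', hdiag]
    simp
  · obtain ⟨a, ha⟩ := finOptionSumEquiv_of_le _ _ hi
    have hzero : φ 0 = none := by simp [φ, finOptionSumEquiv]
    rw [ha, hzero]
    exact hnone a
  · rw [Fin.card_filter_val_lt]
    omega

theorem exists_isSimpleKKAndBN_isControlSet {k m n : ℕ} (hm : 0 < m)
    (hn : n = (2 * k + 1) * m + 1) :
    ∃ (F : Fin n → (Fin n → Bool) → Bool) (U : Finset (Fin n)),
      IsSimpleKKAndBN (k + 1) F ∧ IsControlSet F U ∧ #U = k * m + 1 := by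
  let s (x : Fin k) : (Fin m × Fin k) ⊕ (Fin m × Option (Fin k)) := .inl (⟨0, hm⟩, x)
  let t (x : Fin k) : (Fin m × Fin k) ⊕ (Fin m × Option (Fin k)) := .inr (⟨0, hm⟩, some x)
  have hr : IsBiregular (insertNode (blockRel (Fin m) (Fin k)) s t) (Nat.card (Fin k) + 1) :=
    isBiregular_insertNode (isBiregular_blockRel (Fin m) (Fin k))
      (fun _ _ h => by simpa [s] using h) (fun _ _ h => by simpa [t] using h) fun _ => rfl
  have hcard : n = Nat.card (Fin m × Fin k) + Nat.card (Fin m × Option (Fin k)) + 1 := by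
    simp only [Nat.card_prod, Finite.card_option, Nat.card_fin, hn]
    ring
  simpa [mul_comm m k] using hr.exists_isSimpleKKAndBN
    (by simp [insertNode, blockRel, s]) (by simp [insertNode, s]) hcard

/-- For every `k ≥ 2` and `n = (2k−1)m + 1` with `m > 1`, there exists a
simple `k`-`k`-AND-BN on `n` nodes whose minimum control node set has size
`(k−1)m + 1`. -/
theorem stmt13 (k m : ℕ) (hk : 2 ≤ k) (hm : 1 < m) :
    ∃ F : Fin ((2 * k - 1) * m + 1) → (Fin ((2 * k - 1) * m + 1) → Bool) → Bool,
      IsSimpleKKAndBN k F ∧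
      (∃ U : Finset (Fin ((2 * k - 1) * m + 1)),
        IsControlSet F U ∧ U.card = (k - 1) * m + 1) ∧
      ∀ U : Finset (Fin ((2 * k - 1) * m + 1)),
        IsControlSet F U → (k - 1) * m + 1 ≤ U.card := by
  obtain ⟨k, rfl⟩ := Nat.exists_eq_add_of_le' (one_le_two.trans hk)
  have hn : (2 * (k + 1) - 1) * m + 1 = (2 * k + 1) * m + 1 := rfl
  obtain ⟨F, U, hF, hU, hcard⟩ := exists_isSimpleKKAndBN_isControlSet (zero_lt_one.trans hm) hn
  refine ⟨F, hF, ⟨U, hU, hcard⟩, fun V hV => Nat.lt_of_mul_lt_mul_left (a := 2 * k + 1) ?_⟩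
  calc
    (2 * k + 1) * (k * m) < ((2 * k + 1) * m + 1) * k := by nlinarith
    _ ≤ (2 * k + 1) * #V := hF.mul_le_card hV

end BN
end
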